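/- arXiv:2502.14879 — 8 statements merged into one kernel-verified Lean document; each statement's English description precedes it below -/
import Mathlib

section
/- A choice function c on a finite nonempty set X is a shortlisting if and only if it is a choice with optimal limited attention. -/
/-!
Optimal attention filters are exactly the correspondences `A ↦ max(A, >)` for a strict partial
order `>`; the equivalence follows by keeping the same linear order on both sides.

Given a partial order, the three filter properties of `max(·, >)` are direct, (a) being the place
where transitivity is used (`StrictPartial.optimalFilter`). Conversely, given a filter `Γ`, let `x`
dominate `y` when `y ∉ Γ {x, y}`. Iterating (c) shows that an element of `Γ B` is undominated in
`B`, and iterating (b), starting from `Γ {y} = {y}`, shows that an undominated element of `B` lies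
in `Γ B` (`OptimalFilter.mem_iff_maxOf`). Asymmetry holds because `Γ {x, y}` is nonempty, and
transitivity comes from (a) applied to a three-element menu (`OptimalFilter.strictPartial`).
-/

open Finset

variable {X : Type*} [DecidableEq X]

/-- `a` is the `r`-greatest element among those satisfying `P`. -/
def IsRMax (r : X → X → Prop) (P : X → Prop) (a : X) : Prop :=
  P a ∧ ∀ y, P y → y ≠ a → r a y

/-- `a` is the `r`-least element among those satisfying `P`. -/
def IsRMin (r : X → X → Prop) (P : X → Prop) (a : X) : Prop :=
  P a ∧ ∀ y, P y → y ≠ a → r y a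

def Asym (r : X → X → Prop) : Prop := ∀ x y, r x y → ¬ r y x

def StrictPartial (r : X → X → Prop) : Prop :=
  Asym r ∧ ∀ x y z, r x y → r y z → r x z

def StrictLinear (r : X → X → Prop) : Prop :=
  StrictPartial r ∧ ∀ x y : X, x ≠ y → r x y ∨ r y x

/-- No cycle `x₁ ≻ x₂ ≻ … ≻ xₙ ≻ x₁` with `n ≥ 3`. -/
def Acyclic (r : X → X → Prop) : Prop :=
  ¬ ∃ (n : ℕ) (f : ℕ → X), 3 ≤ n ∧ (∀ i, i + 1 < n → r (f i) (f (i + 1))) ∧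
    r (f (n - 1)) (f 0)

def ChoiceFun (c : Finset X → X) : Prop :=
  ∀ A : Finset X, A.Nonempty → c A ∈ A

def ChoiceCorr (Γ : Finset X → Finset X) : Prop :=
  ∀ A : Finset X, A.Nonempty → (Γ A).Nonempty ∧ Γ A ⊆ A

/-- `x ∈ max(A, r)`: `x` is in `A` and is undominated in `A` w.r.t. `r`. -/
def MaxOf (r : X → X → Prop) (A : Finset X) (x : X) : Prop :=
  x ∈ A ∧ ∀ y ∈ A, ¬ r y x

/-- The pair `(gt, rhd)` describes `c` as a shortlisting. -/
def Describes (gt rhd : X → X → Prop) (c : Finset X → X) : Prop :=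
  StrictPartial gt ∧ StrictLinear rhd ∧
    ∀ A : Finset X, A.Nonempty → IsRMax rhd (MaxOf gt A) (c A)

def Shortlisting (c : Finset X → X) : Prop :=
  ∃ gt rhd : X → X → Prop, Describes gt rhd c

/-- Optimal attention filter. -/
def OptimalFilter (Γ : Finset X → Finset X) : Prop :=
  ChoiceCorr Γ ∧
  (∀ B : Finset X, B.Nonempty → ∀ x ∈ B, x ∉ Γ B → Γ (B.erase x) ⊆ Γ B) ∧
  (∀ B : Finset X, B.Nonempty → ∀ x ∈ B, ∀ y : X,
    y ∈ Γ {x, y} → y ∈ Γ (B.erase x) → y ∈ Γ B) ∧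
  (∀ B : Finset X, B.Nonempty → ∀ x ∈ B, (B.erase x).Nonempty →
    (Γ B).erase x ⊆ Γ (B.erase x))

/-- `(Γ, rhd)` is an explanation by optimal limited attention of `c`. -/
def ExplByOLA (Γ : Finset X → Finset X) (rhd : X → X → Prop) (c : Finset X → X) : Prop :=
  OptimalFilter Γ ∧ StrictLinear rhd ∧
    ∀ A : Finset X, A.Nonempty → IsRMax rhd (· ∈ Γ A) (c A)

/-- Choice with optimal limited attention. -/
def COLA (c : Finset X → X) : Prop :=
  ∃ (Γ : Finset X → Finset X) (rhd : X → X → Prop), ExplByOLA Γ rhd c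

/-- Salient attention filter relative to `rhd`. -/
def SalientFilter (rhd : X → X → Prop) (Γ : Finset X → Finset X) : Prop :=
  ChoiceCorr Γ ∧
  ∀ B : Finset X, B.Nonempty → ∀ x ∈ B,
    ¬ IsRMin rhd (· ∈ B) x → ¬ IsRMax rhd (· ∈ Γ B) x →
      (Γ B).erase x = Γ (B.erase x)

/-- `(Γ, rhd)` is an explanation by salient limited attention of `c`. -/
def ExplBySLA (Γ : Finset X → Finset X) (rhd : X → X → Prop) (c : Finset X → X) : Prop :=
  StrictLinear rhd ∧ SalientFilter rhd Γ ∧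
    ∀ A : Finset X, A.Nonempty → IsRMax rhd (· ∈ Γ A) (c A)

/-- Choice with salient limited attention. -/
def CSLA (c : Finset X → X) : Prop :=
  ∃ (Γ : Finset X → Finset X) (rhd : X → X → Prop), ExplBySLA Γ rhd c

/-- Selective salient attention filter relative to `rhd`. -/
def SelectiveFilter (rhd : X → X → Prop) (Γ : Finset X → Finset X) : Prop :=
  ChoiceCorr Γ ∧
  ∀ B : Finset X, B.Nonempty → ∀ x ∈ B,
    ¬ IsRMax rhd (· ∈ Γ B) x → (Γ B).erase x = Γ (B.erase x)

/-- Choice with selective salient limited attention. -/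
def CSSLA (c : Finset X → X) : Prop :=
  ∃ (Γ : Finset X → Finset X) (rhd : X → X → Prop),
    StrictLinear rhd ∧ SelectiveFilter rhd Γ ∧
      ∀ A : Finset X, A.Nonempty → IsRMax rhd (· ∈ Γ A) (c A)

def Rationalizable (c : Finset X → X) : Prop :=
  ∃ rhd : X → X → Prop, StrictLinear rhd ∧
    ∀ A : Finset X, A.Nonempty → IsRMax rhd (· ∈ A) (c A)

/-- Competitive attention filter relative to `rhd`. -/
def CompetitiveFilter (rhd : X → X → Prop) (Γ : Finset X → Finset X) : Prop :=
  ChoiceCorr Γ ∧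
  (∀ A : Finset X, A.Nonempty → ∀ x ∈ A, x ∉ Γ A → Γ A = Γ (A.erase x)) ∧
  (∀ A : Finset X, 1 < A.card → ∀ x y : X,
    IsRMax rhd (· ∈ A) y → IsRMax rhd (· ∈ Γ (A.erase y)) x →
      (y ∈ Γ {x, y} ↔ y ∈ Γ A))

/-- `(Γ, rhd)` is an explanation by competitive limited attention of `c`. -/
def ExplByCCLA (Γ : Finset X → Finset X) (rhd : X → X → Prop) (c : Finset X → X) : Prop :=
  StrictLinear rhd ∧ CompetitiveFilter rhd Γ ∧
    ∀ A : Finset X, A.Nonempty → IsRMax rhd (· ∈ Γ A) (c A)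

/-- Choice with competitive limited attention. -/
def CCLA (c : Finset X → X) : Prop :=
  ∃ (Γ : Finset X → Finset X) (rhd : X → X → Prop), ExplByCCLA Γ rhd c

/-- The list `f` list rationalizes `c`. -/
def ListRationalizes (f : X → X → Prop) (c : Finset X → X) : Prop :=
  StrictLinear f ∧
    ∀ A : Finset X, 1 < A.card → ∀ l : X, IsRMax f (· ∈ A) l →
      c A = c {c (A.erase l), l}

def ListRational (c : Finset X → X) : Prop :=
  ∃ f : X → X → Prop, ListRationalizes f c

/-- `(u, v, W)` is a general-temptation representation of `c`. -/
def GTRrep (c : Finset X → X) (u v : X → ℝ) (W : ℝ → ℝ → ℝ) : Prop :=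
  (∀ r s : ℝ, 0 ≤ W r s) ∧
  (∀ r₁ r₂ s : ℝ, r₁ < r₂ → W r₁ s < W r₂ s) ∧
  (∀ r s₁ s₂ : ℝ, s₁ < s₂ → W r s₁ < W r s₂) ∧
  ∀ (A : Finset X) (hA : A.Nonempty),
    c A ∈ A ∧ ∀ x ∈ A, x ≠ c A →
      W (u x) (v x - A.sup' hA v) < W (u (c A)) (v (c A) - A.sup' hA v)

def HasGTR (c : Finset X → X) : Prop :=
  ∃ (u v : X → ℝ) (W : ℝ → ℝ → ℝ), GTRrep c u v W

/-- `(gg, U)` is a conspicuity based endogenous reference representation of `c`. -/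
def CERrep (c : Finset X → X) (gg : X → X → Prop) (U : X → X → ℝ) : Prop :=
  StrictLinear gg ∧ (∀ z : X, Function.Injective (U z)) ∧
  ∀ A : Finset X, A.Nonempty → ∀ m : X, IsRMax gg (· ∈ A) m →
    c A ∈ A ∧ ∀ x ∈ A, x ≠ c A → U m x < U m (c A)

def HasCER (c : Finset X → X) : Prop :=
  ∃ (gg : X → X → Prop) (U : X → X → ℝ), CERrep c gg U

/-- `(A, B)` is a switch of `c`. -/
def Switch (c : Finset X → X) (A B : Finset X) : Prop :=
  A.Nonempty ∧ A ⊆ B ∧ c B ∈ A ∧ c A ≠ c B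

/-- Revealed salience: `x ⊨_c y`. -/
def RevSal (c : Finset X → X) (x y : X) : Prop :=
  ∃ A : Finset X, x ∈ A ∧ y ∈ A ∧ x ≠ c A ∧ c (A.erase x) ≠ c A

/-- Axiom of Revealed Temptation. -/
def ART (c : Finset X → X) : Prop :=
  ∀ B : Finset X, B.Nonempty → ∃ x ∈ B,
    ∀ B' B'' : Finset X, x ∈ B' → B' ⊂ B'' → B'' ⊆ B → ¬ Switch c B' B''

/-- The revealed relation `R^c`. -/
def Rrel (c : Finset X → X) (x y : X) : Prop :=
  (∃ A : Finset X, A.Nonempty ∧ x = c (insert y A) ∧ x ≠ c A) ∨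
  (∃ A : Finset X, A.Nonempty ∧ y = c (insert x A) ∧ x = c {x, y}) ∨
  (∃ A : Finset X, A.Nonempty ∧ y ≠ c (insert x A) ∧ y = c {x, y} ∧ y = c A)

/-- The revealed-to-follow relation `F_c`. -/
def Frel (c : Finset X → X) (x y : X) : Prop :=
  (∃ A : Finset X, A.Nonempty ∧ x = c (insert y A) ∧ y = c {x, y}) ∨
  (∃ A : Finset X, A.Nonempty ∧ x = c (insert y A) ∧ x ≠ c A) ∨
  (∃ A : Finset X, A.Nonempty ∧ x ≠ c (insert y A) ∧ x = c {x, y} ∧ x = c A)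

/-- Property (c) iterated: attention to `y` survives the removal of any set of other alternatives. -/
lemma OptimalFilter.mem_sdiff {Γ : Finset X → Finset X} (h : OptimalFilter Γ) {B : Finset X}
    {y : X} (hyB : y ∈ B) (hy : y ∈ Γ B) (S : Finset X) (hS : y ∉ S) : y ∈ Γ (B \ S) := by
  obtain ⟨-, -, -, hc⟩ := h
  induction S using Finset.induction_on with
  | empty => simpa using hy
  | insert a S _ ih =>
    have hya : y ≠ a := fun e => hS (by simp [e])
    have hyS : y ∉ S := fun e => hS (by simp [e])
    rw [sdiff_insert]
    by_cases haB : a ∈ B \ S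
    · exact hc _ ⟨a, haB⟩ a haB ⟨y, by simp [hyB, hya, hyS]⟩ (mem_erase.2 ⟨hya, ih hyS⟩)
    · rw [erase_eq_of_notMem haB]
      exact ih hyS

/-- Property (b) iterated: if `y` is noticed against each member of `S` separately, it is noticed
against all of them together. -/
lemma OptimalFilter.mem_insert_of_pairs {Γ : Finset X → Finset X} (h : OptimalFilter Γ) {y : X}
    (S : Finset X) (hS : y ∉ S) (hp : ∀ x ∈ S, y ∈ Γ {x, y}) : y ∈ Γ (insert y S) := by
  obtain ⟨hcorr, -, hb, -⟩ := h
  induction S using Finset.induction_on with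
  | empty =>
    obtain ⟨⟨z, hz⟩, hsub⟩ := hcorr {y} (singleton_nonempty y)
    have hzy : z = y := mem_singleton.1 (hsub hz)
    simpa [hzy] using hz
  | insert a S ha ih =>
    have hya : y ≠ a := fun e => hS (by simp [e])
    have hyS : y ∉ S := fun e => hS (by simp [e])
    refine hb _ (insert_nonempty _ _) a (by simp) y (hp a (by simp)) ?_
    have e : (insert y (insert a S)).erase a = insert y S := by
      rw [insert_comm, erase_insert (by simp [ha, hya.symm])]
    rw [e]
    exact ih hyS fun x hx => hp x (mem_insert_of_mem hx)

/-- The domination relation revealed by a filter on pairs: `x` draws attention away from `y`. -/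
def FilterDom (Γ : Finset X → Finset X) (x y : X) : Prop := x ≠ y ∧ y ∉ Γ {x, y}

/-- An optimal attention filter is determined by its values on pairs: it selects the undominated
elements of the menu for `FilterDom Γ`. -/
lemma OptimalFilter.mem_iff_maxOf {Γ : Finset X → Finset X} (h : OptimalFilter Γ) {B : Finset X}
    (hB : B.Nonempty) (y : X) : y ∈ Γ B ↔ MaxOf (FilterDom Γ) B y := by
  constructor
  · intro hy
    have hyB := (h.1 B hB).2 hy
    refine ⟨hyB, fun x hx hd => hd.2 ?_⟩
    have hsub : ({x, y} : Finset X) ⊆ B := by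
      intro z hz
      rcases mem_insert.1 hz with rfl | hz
      · exact hx
      · rwa [mem_singleton.1 hz]
    have := h.mem_sdiff hyB hy (B \ {x, y}) (by simp)
    rwa [Finset.sdiff_sdiff_eq_self hsub] at this
  · rintro ⟨hyB, hmax⟩
    rw [← insert_erase hyB]
    refine h.mem_insert_of_pairs _ (by simp) fun x hx => ?_
    by_contra hn
    exact hmax x (mem_of_mem_erase hx) ⟨ne_of_mem_erase hx, hn⟩

lemma OptimalFilter.strictPartial {Γ : Finset X → Finset X} (h : OptimalFilter Γ) :
    StrictPartial (FilterDom Γ) := by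
  have hasym : Asym (FilterDom Γ) := by
    rintro x y ⟨-, hy⟩ ⟨-, hx⟩
    obtain ⟨⟨z, hz⟩, hsub⟩ := h.1 {x, y} (insert_nonempty _ _)
    rcases mem_insert.1 (hsub hz) with rfl | hz'
    · exact hx (by rwa [pair_comm])
    · rw [mem_singleton.1 hz'] at hz
      exact hy hz
  refine ⟨hasym, fun x y z hxy hyz => ?_⟩
  have hxz : x ≠ z := by
    rintro rfl
    exact hasym _ _ hxy hyz
  refine ⟨hxz, fun hz => ?_⟩
  have hne : ({y, x, z} : Finset X).Nonempty := insert_nonempty _ _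
  have hyn : y ∉ Γ {y, x, z} := fun hy =>
    ((h.mem_iff_maxOf hne y).1 hy).2 x (by simp) hxy
  -- Since `y` goes unnoticed in `{y, x, z}`, property (a) carries `z` over from `{x, z}`.
  have hz' : z ∈ Γ {y, x, z} := by
    refine h.2.1 _ hne y (by simp) hyn ?_
    rwa [erase_insert (by simp [hxy.1.symm, hyz.1])]
  exact ((h.mem_iff_maxOf hne z).1 hz').2 y (by simp) hyz

open Classical in
/-- The maximal elements of a strict partial order form an optimal attention filter, as soon as
every menu has one. -/
lemma StrictPartial.optimalFilter {gt : X → X → Prop} (h : StrictPartial gt)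
    (hne : ∀ A : Finset X, A.Nonempty → ∃ a, MaxOf gt A a) :
    OptimalFilter fun A => {x ∈ A | ∀ y ∈ A, ¬ gt y x} := by
  refine ⟨fun A hA => ⟨?_, filter_subset _ _⟩, ?_, ?_, ?_⟩
  · obtain ⟨a, ha⟩ := hne A hA
    exact ⟨a, mem_filter.2 ha⟩
  · intro B _ x hx hxn y hy
    simp only [mem_filter, mem_erase, not_and, not_forall, not_not] at hxn hy ⊢
    refine ⟨hy.1.2, fun z hz hzy => ?_⟩
    by_cases hzx : z = x
    · -- A dominator `w` of `x` also dominates whatever `x` dominates.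
      subst hzx
      obtain ⟨w, hw, hwz⟩ := hxn hx
      have hwne : w ≠ z := by
        rintro rfl
        exact h.1 _ _ hwz hwz
      exact hy.2 w ⟨hwne, hw⟩ (h.2 _ _ _ hwz hzy)
    · exact hy.2 z ⟨hzx, hz⟩ hzy
  · intro B _ x _ y hxy hy
    simp only [mem_filter, mem_erase] at hxy hy ⊢
    refine ⟨hy.1.2, fun z hz => ?_⟩
    by_cases hzx : z = x
    · subst hzx
      exact hxy.2 z (by simp)
    · exact hy.2 z ⟨hzx, hz⟩
  · intro B _ x _ _ y hy
    simp only [mem_filter, mem_erase] at hy ⊢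
    exact ⟨⟨hy.1, hy.2.1⟩, fun z hz => hy.2.2 z hz.2⟩

/-- A choice function on a finite nonempty set is a shortlisting
if and only if it is a choice with optimal limited attention. -/
theorem stmt_0 [Fintype X] [Nonempty X] (c : Finset X → X) (hc : ChoiceFun c) :
    Shortlisting c ↔ COLA c := by
  constructor
  · rintro ⟨gt, rhd, hgt, hrhd, hmax⟩
    classical
    refine ⟨_, rhd, hgt.optimalFilter fun A hA => ⟨c A, (hmax A hA).1⟩, hrhd, fun A hA => ?_⟩
    simpa only [IsRMax, MaxOf, mem_filter] using hmax A hA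
  · rintro ⟨Γ, rhd, hΓ, hrhd, hmax⟩
    refine ⟨FilterDom Γ, rhd, hΓ.strictPartial, hrhd, fun A hA => ?_⟩
    simpa only [IsRMax, hΓ.mem_iff_maxOf hA] using hmax A hA
end

section
/- Let c be a choice with optimal limited attention (equivalently, a shortlisting) on a finite nonempty set X, and suppose there exist a menu A and x ∈ A such that x ≠ c(A) and c(A) ≠ c(A\{x}). Then for every pair (>,▷) that describes c as a shortlisting: x > c(A\{x}), x ∈ max(A,>), and c(A\{x}) ▷ c(A) ▷ x. -/
/-!
Removing `x ≠ c A` from `A` keeps `c A` undominated, so `c (A.erase x)` beats `c A` under the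
linear order. Thus `c (A.erase x)` must be dominated in `A`, necessarily by `x`. By transitivity
nothing in `A` dominates `x`, since it would also dominate `c (A.erase x)` within `A.erase x`.
So `x` is shortlisted in `A` and, not being chosen, lies below `c A`.
-/

open Finset

variable {X : Type*} [DecidableEq X]

theorem stmt_1 [Fintype X] [Nonempty X] (c : Finset X → X) (hc : ChoiceFun c)
    (hCOLA : COLA c) (A : Finset X) (hA : A.Nonempty) (x : X) (hx : x ∈ A)
    (h1 : x ≠ c A) (h2 : c A ≠ c (A.erase x)) :
    ∀ gt rhd : X → X → Prop, Describes gt rhd c →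
      gt x (c (A.erase x)) ∧ MaxOf gt A x ∧
        rhd (c (A.erase x)) (c A) ∧ rhd (c A) x := by
  intro gt rhd ⟨⟨gt_asym, gt_trans⟩, ⟨⟨rhd_asym, _⟩, _⟩, hdesc⟩
  have hcA : c A ∈ A.erase x := mem_erase.2 ⟨h1.symm, hc A hA⟩
  obtain ⟨hmaxA, hbestA⟩ := hdesc A hA
  obtain ⟨⟨hbA, hbmax⟩, hbestB⟩ := hdesc (A.erase x) ⟨_, hcA⟩
  -- `c A` stays undominated in the smaller menu, so the new choice beats it under `rhd`.
  have hba : rhd (c (A.erase x)) (c A) :=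
    hbestB _ ⟨hcA, fun y hy => hmaxA.2 y (mem_of_mem_erase hy)⟩ h2
  -- Were `c (A.erase x)` undominated in `A`, it would be beaten by `c A`; hence something in `A`
  -- dominates it, and this can only be `x`.
  have hxb : gt x (c (A.erase x)) := by
    by_contra hn
    refine rhd_asym _ _ hba (hbestA _ ⟨mem_of_mem_erase hbA, fun y hy hyb => ?_⟩ h2.symm)
    rcases eq_or_ne y x with rfl | hyx
    · exact hn hyb
    · exact hbmax y (mem_erase.2 ⟨hyx, hy⟩) hyb
  -- By transitivity, a dominator of `x` would dominate `c (A.erase x)` inside `A.erase x`.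
  have hxmax : MaxOf gt A x := by
    refine ⟨hx, fun y hy hyx => ?_⟩
    have hne : y ≠ x := by
      rintro rfl
      exact gt_asym _ _ hyx hyx
    exact hbmax y (mem_erase.2 ⟨hne, hy⟩) (gt_trans _ _ _ hyx hxb)
  exact ⟨hxb, hxmax, hba, hbestA x hxmax h1⟩
end

section
/- Let c be a choice with optimal limited attention on a finite nonempty set X, and suppose there exist a menu A and x ∈ A such that x ≠ c(A) and c(A) ≠ c(A\{x}). Then for every explanation by optimal limited attention (Γ,▷) of c: x ∈ Γ(A), c(A\{x}) ∉ Γ(A), c(A\{x}) ∉ Γ({c(A\{x}),x}), c(A) ∈ Γ({c(A),x}), and c(A\{x}) ▷ c(A) ▷ x. -/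
/-!
Write `a = c A` and `b = c (A \ {x})`. Since `a ≠ x`, heredity of attention (condition (c) of an
optimal filter) puts `a` in `Γ (A \ {x})`, so `b ▷ a`; hence `b ∉ Γ A`, as `a` is the maximum there.
Condition (a) then forces `x ∈ Γ A`, so `a ▷ x`, and condition (b) forces `b ∉ Γ {b, x}`.
Finally `a ∈ Γ {a, x}` follows by iterating (c) from `A` down to `{a, x}`
(`OptimalFilter.mem_of_subset`).
-/

open Finset

variable {X : Type*} [DecidableEq X]

/-- Iterated form of condition (c): an alternative that is noticed in a menu is noticed in every
submenu containing it. -/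
theorem OptimalFilter.mem_of_subset {Γ : Finset X → Finset X} (hΓ : OptimalFilter Γ) {a : X}
    {B : Finset X} (haB : a ∈ B) (A : Finset X) (hBA : B ⊆ A) (ha : a ∈ Γ A) : a ∈ Γ B := by
  induction A using Finset.strongInduction with
  | H A ih =>
    by_cases hAB : A ⊆ B
    · rwa [hBA.antisymm hAB]
    · obtain ⟨z, hzA, hzB⟩ := Finset.not_subset.mp hAB
      have haz : a ≠ z := fun h => hzB (h ▸ haB)
      have haE : a ∈ A.erase z := Finset.mem_erase.mpr ⟨haz, hBA haB⟩
      exact ih _ (Finset.erase_ssubset hzA) (Finset.subset_erase.mpr ⟨hBA, hzB⟩)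
        (hΓ.2.2.2 A ⟨z, hzA⟩ z hzA ⟨a, haE⟩ (Finset.mem_erase.mpr ⟨haz, ha⟩))

theorem stmt_2 [Fintype X] [Nonempty X] (c : Finset X → X) (hc : ChoiceFun c)
    (hCOLA : COLA c) (A : Finset X) (hA : A.Nonempty) (x : X) (hx : x ∈ A)
    (h1 : x ≠ c A) (h2 : c A ≠ c (A.erase x)) :
    ∀ (Γ : Finset X → Finset X) (rhd : X → X → Prop), ExplByOLA Γ rhd c →
      x ∈ Γ A ∧ c (A.erase x) ∉ Γ A ∧
        c (A.erase x) ∉ Γ {c (A.erase x), x} ∧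
        c A ∈ Γ {c A, x} ∧
        rhd (c (A.erase x)) (c A) ∧ rhd (c A) x := by
  intro Γ rhd hE
  obtain ⟨hΓ, hlin, hmax⟩ := hE
  have haA : c A ∈ A := hc A hA
  have hne : (A.erase x).Nonempty := ⟨c A, Finset.mem_erase.mpr ⟨h1.symm, haA⟩⟩
  obtain ⟨haΓ, hatop⟩ := hmax A hA
  obtain ⟨hbΓ, hbtop⟩ := hmax (A.erase x) hne
  have haE : c A ∈ Γ (A.erase x) :=
    hΓ.2.2.2 A hA x hx hne (Finset.mem_erase.mpr ⟨h1.symm, haΓ⟩)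
  have hba : rhd (c (A.erase x)) (c A) := hbtop _ haE h2
  have hbA : c (A.erase x) ∉ Γ A := fun h => hlin.1.1 _ _ hba (hatop _ h h2.symm)
  have hxA : x ∈ Γ A := by
    by_contra h
    exact hbA (hΓ.2.1 A hA x hx h hbΓ)
  refine ⟨hxA, hbA, fun h => ?_, ?_, hba, hatop _ hxA h1⟩
  · rw [Finset.pair_comm] at h
    exact hbA (hΓ.2.2.1 A hA x hx _ h hbΓ)
  · refine hΓ.mem_of_subset (Finset.mem_insert_self _ _) A ?_ haΓ
    exact Finset.insert_subset haA (Finset.singleton_subset_iff.mpr hx)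
end

section
/- For every choice with salient limited attention c on a finite nonempty set X, there exists an explanation by salient limited attention (Γ,▷) of c such that Γ is an attention filter, i.e., for all menus B and x ∈ B, x ∉ Γ(B) implies Γ(B) = Γ(B\{x}). -/
/-! The order `rhd` of the given explanation is kept, and the filter is enlarged to
`Γ' B = {y ∈ B | y = c B ∨ rhd (c B) y}`, the `rhd`-lower set of `c B` in `B`. Salience of the
original filter forces `c (B.erase x) = c B` whenever `x ∈ B` is neither the minimum of `B` nor
`c B` (`choice_erase_eq`), and then `Γ' (B.erase x) = (Γ' B).erase x` by definition, so `Γ'` is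
salient. If `x ∈ B` lies outside `Γ' B`, then `x ≠ c B` and `c B` is not above `x`, so `x` is neither the minimum nor
chosen, and the same identity is the attention filter property. -/

open Finset

variable {X : Type*} [DecidableEq X]

/-- Removing an alternative that is neither the worst of the menu nor the chosen one does not
change the choice. -/
theorem choice_erase_eq {c : Finset X → X} {Γ : Finset X → Finset X} {rhd : X → X → Prop}
    (hc : ChoiceFun c) (h : ExplBySLA Γ rhd c) {B : Finset X} (hB : B.Nonempty) {x : X}
    (hx : x ∈ B) (hmin : ¬ IsRMin rhd (· ∈ B) x) (hne : x ≠ c B) : c (B.erase x) = c B := by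
  obtain ⟨⟨⟨hasym, -⟩, -⟩, ⟨-, hsal⟩, hmax⟩ := h
  have hB' : (B.erase x).Nonempty := ⟨c B, mem_erase.2 ⟨hne.symm, hc B hB⟩⟩
  obtain ⟨h1, h2⟩ := hmax B hB
  obtain ⟨h3, h4⟩ := hmax _ hB'
  have hΓ := hsal B hB x hx hmin fun hm =>
    hasym _ _ (hm.2 _ h1 hne.symm) (h2 x hm.1 hne)
  simp only [← hΓ, mem_erase] at h3 h4
  by_contra hcc
  exact hasym _ _ (h2 _ h3.2 hcc) (h4 _ ⟨hne.symm, h1⟩ (Ne.symm hcc))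

theorem stmt_5 [Fintype X] [Nonempty X] (c : Finset X → X) (hc : ChoiceFun c)
    (hCSLA : CSLA c) :
    ∃ (Γ : Finset X → Finset X) (rhd : X → X → Prop), ExplBySLA Γ rhd c ∧
      ∀ B : Finset X, B.Nonempty → ∀ x ∈ B, x ∉ Γ B → Γ B = Γ (B.erase x) := by
  classical
  obtain ⟨Γ, rhd, h⟩ := hCSLA
  let Γ' : Finset X → Finset X := fun B => B.filter fun y => y = c B ∨ rhd (c B) y
  have hmem : ∀ B y, y ∈ Γ' B ↔ y ∈ B ∧ (y = c B ∨ rhd (c B) y) := fun B y => mem_filter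
  have hmax : ∀ B : Finset X, B.Nonempty → IsRMax rhd (· ∈ Γ' B) (c B) := fun B hB =>
    ⟨(hmem B _).2 ⟨hc B hB, Or.inl rfl⟩, fun y hy hne => ((hmem B y).1 hy).2.resolve_left hne⟩
  have herase : ∀ B : Finset X, B.Nonempty → ∀ x ∈ B, ¬ IsRMin rhd (· ∈ B) x → x ≠ c B →
      (Γ' B).erase x = Γ' (B.erase x) := by
    intro B hB x hx hmin hne
    ext y
    rw [mem_erase, hmem, hmem, choice_erase_eq hc h hB hx hmin hne, mem_erase, and_assoc]
  refine ⟨Γ', rhd, ⟨h.1, ⟨fun B hB => ⟨⟨c B, (hmax B hB).1⟩, filter_subset _ _⟩, ?_⟩, hmax⟩, ?_⟩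
  · intro B hB x hx hmin hnm
    exact herase B hB x hx hmin fun e => hnm (e ▸ hmax B hB)
  · intro B hB x hx hxΓ
    have hne : x ≠ c B := fun e => hxΓ (e ▸ (hmax B hB).1)
    have hnot : ¬ rhd (c B) x := fun hr => hxΓ ((hmem B x).2 ⟨hx, Or.inr hr⟩)
    rw [← herase B hB x hx (fun hm => hnot (hm.2 _ (hc B hB) hne.symm)) hne,
      erase_eq_of_notMem hxΓ]
end

section
/- For a choice function c on a finite nonempty set X, the following are equivalent: (i) c has a general-temptation representation; (ii) c admits a conspicuity based endogenous reference representation; (iii) c is a choice with salient limited attention. -/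
/-!
The link between the three models is that the reference point of a menu `A` plays three roles: it
is the most tempting element (maximum of `v`), the most conspicuous one (maximum of `≫`) and the
`▷`-worst one, where `▷` is the reverse of `≫`. Among menus sharing a reference point `m`, each
model says that choice maximizes a fixed linear order depending on `m`.

* Temptation to reference: order `X` by `v` with ties broken (`exists_injective_refinement`), and
  let `U m` be `x ↦ W (u x) (v x - v m)`, again with ties broken.
* Reference to temptation: let `v` be the integer rank in `≫` and `u = -v`. The points
  `(u x, v x - v z)` then satisfy: if the point of `(x, z)` lies below that of `(y, z')`, then
  `v z' < v z` or the two pairs coincide. The lexicographic rank `T x z` (first by decreasing `v z`,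
  then by `U z x`) is therefore monotone on these points. It extends to a weakly increasing
  natural-valued function on the plane by taking suprema, and adding a strictly increasing function
  with values in `(0, 1)` makes it strictly increasing without disturbing strict inequalities of `T`.
* Reference to attention: take `Γ B` to be `c B` together with all more conspicuous elements of `B`.
* Attention to reference: with the `▷`-minimum `m` fixed, discarding unchosen elements other than
  `m` does not affect the choice (`csla_contract`), and then counting the `w` with
  `c {x, w, m} = x` gives a utility `x ↦ U m x` rationalizing these menus.
-/

open Finset

variable {X : Type*} [DecidableEq X]

/-- Ties of a real-valued function on a finite type can be broken. -/
theorem exists_injective_refinement [Fintype X] (f : X → ℝ) :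
    ∃ g : X → ℝ, Function.Injective g ∧ ∀ x y, f x < f y → g x < g y := by
  classical
  let e := Fintype.equivFin X
  let L : X → X → Prop := fun y x => f y < f x ∨ (f y = f x ∧ e y < e x)
  have htrans : ∀ a b d, L a b → L b d → L a d := by
    rintro a b d (h | ⟨h, h'⟩) (k | ⟨k, k'⟩)
    · exact Or.inl (h.trans k)
    · exact Or.inl (k ▸ h)
    · exact Or.inl (h ▸ k)
    · exact Or.inr ⟨h.trans k, h'.trans k'⟩
  have hirr : ∀ a, ¬ L a a := by
    rintro a (h | ⟨-, h⟩) <;> exact lt_irrefl _ h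
  have hmono : ∀ x y, L x y → #{w | L w x} < #{w | L w y} := by
    intro x y hxy
    apply Finset.card_lt_card
    refine (Finset.ssubset_iff_of_subset ?_).2 ⟨x, by simpa using hxy, by simpa using hirr x⟩
    intro w hw
    simp only [mem_filter, mem_univ, true_and] at hw ⊢
    exact htrans _ _ _ hw hxy
  refine ⟨fun x => (#{w | L w x} : ℝ), ?_, fun x y h => ?_⟩
  · intro x y hxy
    by_contra hne
    have hxy' : #{w | L w x} = #{w | L w y} := Nat.cast_injective (R := ℝ) hxy
    have he : e x ≠ e y := fun h => hne (e.injective h)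
    rcases lt_trichotomy (f x) (f y) with h | h | h
    · exact (hmono x y (Or.inl h)).ne hxy'
    · rcases lt_or_gt_of_ne he with h' | h'
      · exact (hmono x y (Or.inr ⟨h, h'⟩)).ne hxy'
      · exact (hmono y x (Or.inr ⟨h.symm, h'⟩)).ne hxy'.symm
    · exact (hmono y x (Or.inl h)).ne hxy'.symm
  · exact Nat.cast_lt.2 (hmono x y (Or.inl h))

theorem hasCER_of_hasGTR [Fintype X] (c : Finset X → X) (h : HasGTR c) : HasCER c := by
  obtain ⟨u, v, W, -, -, -, hW⟩ := h
  obtain ⟨g, hg, hvg⟩ := exists_injective_refinement v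
  choose U hU hUW using fun z : X => exists_injective_refinement fun x => W (u x) (v x - v z)
  refine ⟨fun x y => g y < g x, U, ⟨⟨fun x y h => lt_asymm h, fun x y z h h' => h'.trans h⟩,
    fun x y hne => ?_⟩, hU, ?_⟩
  · exact (lt_or_gt_of_ne fun h => hne (hg h)).symm
  · intro A hA m hm
    have hsup : A.sup' hA v = v m := by
      apply le_antisymm
      · refine Finset.sup'_le _ _ fun y hy => ?_
        by_contra hlt
        have hlt := hvg _ _ (not_le.1 hlt)
        by_cases hym : y = m
        · subst hym; exact lt_irrefl _ hlt
        · exact lt_asymm hlt (hm.2 y hy hym)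
      · exact Finset.le_sup' v hm.1
    obtain ⟨h1, h2⟩ := hW A hA
    rw [hsup] at h2
    exact ⟨h1, fun x hx hne => hUW m _ _ (h2 x hx hne)⟩

theorem hasGTR_of_hasCER [Fintype X] (c : Finset X → X) (h : HasCER c) : HasGTR c := by
  classical
  obtain ⟨gg, U, ⟨⟨hasym, htrans⟩, htot⟩, hU, hc⟩ := h
  let N := Fintype.card X
  let n : X → ℕ := fun x => #{y | gg x y}
  have hn : ∀ x y, gg x y → n y < n x := by
    intro x y hxy
    apply Finset.card_lt_card
    refine (Finset.ssubset_iff_of_subset ?_).2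
      ⟨y, by simpa using hxy, by simpa using fun h => hasym _ _ h h⟩
    intro w hw
    simp only [mem_filter, mem_univ, true_and] at hw ⊢
    exact htrans _ _ _ hxy hw
  have hninj : Function.Injective n := by
    intro x y hxy
    by_contra hne
    rcases htot x y hne with h | h
    · exact (hn _ _ h).ne' hxy
    · exact (hn _ _ h).ne hxy
  have hnN : ∀ x, n x ≤ N := fun x => Finset.card_le_univ _
  let rk : X → X → ℕ := fun z x => #{y | U z y < U z x}
  have hrk : ∀ z x y, U z x < U z y → rk z x < rk z y := by
    intro z x y hxy
    apply Finset.card_lt_card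
    refine (Finset.ssubset_iff_of_subset ?_).2 ⟨x, by simpa using hxy, by simp⟩
    intro w hw
    simp only [mem_filter, mem_univ, true_and] at hw ⊢
    exact hw.trans hxy
  have hrkN : ∀ z x, rk z x ≤ N := fun z x => Finset.card_le_univ _
  let T : X × X → ℕ := fun p => N * (N - n p.2) + rk p.2 p.1
  let v : X → ℝ := fun x => n x
  let u : X → ℝ := fun x => - v x
  -- `Finset.sup` in `ℕ` is `0` on the empty set, so `G` needs no nonemptiness.
  let G : ℝ → ℝ → ℕ := fun r s => ({p | u p.1 ≤ r ∧ v p.1 - v p.2 ≤ s} : Finset (X × X)).sup T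
  have hGmono : ∀ r r' s s', r ≤ r' → s ≤ s' → G r s ≤ G r' s' := by
    intro r r' s s' hr hs
    apply Finset.sup_mono
    intro p hp
    simp only [mem_filter, mem_univ, true_and] at hp ⊢
    exact ⟨hp.1.trans hr, hp.2.trans hs⟩
  have hGT : ∀ x z, G (u x) (v x - v z) = T (x, z) := by
    intro x z
    apply le_antisymm
    · refine Finset.sup_le fun p hp => ?_
      obtain ⟨y, w⟩ := p
      simp only [mem_filter, mem_univ, true_and, u, v] at hp
      obtain ⟨h1, h2⟩ := hp
      have h1' : n x ≤ n y := by
        have : (n x : ℝ) ≤ n y := by linarith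
        exact_mod_cast this
      have h2' : n y + n z ≤ n x + n w := by
        have : (n y : ℝ) + n z ≤ n x + n w := by linarith
        exact_mod_cast this
      rcases (show n z ≤ n w by omega).eq_or_lt with h | h
      · obtain rfl := hninj h
        obtain rfl : x = y := hninj (by omega)
        exact le_rfl
      · have h3 : N - n w + 1 ≤ N - n z := by have := hnN w; omega
        have h4 := Nat.mul_le_mul_left N h3
        have h5 := hrkN w y
        simp only [T]
        rw [Nat.mul_add, Nat.mul_one] at h4
        omega
    · exact Finset.le_sup (f := T) (b := (x, z)) (by simp)
  let W : ℝ → ℝ → ℝ := fun r s => G r s + Real.sigmoid (r + s)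
  refine ⟨u, v, W, fun r s => ?_, fun r r' s h => ?_, fun r s s' h => ?_, fun A hA => ?_⟩
  · exact add_nonneg (Nat.cast_nonneg _) (Real.sigmoid_nonneg _)
  · exact add_lt_add_of_le_of_lt (Nat.cast_le.2 (hGmono _ _ _ _ h.le le_rfl))
      (Real.sigmoid_lt (by linarith))
  · exact add_lt_add_of_le_of_lt (Nat.cast_le.2 (hGmono _ _ _ _ le_rfl h.le))
      (Real.sigmoid_lt (by linarith))
  · obtain ⟨m, hm, hmax⟩ := Finset.exists_max_image A n hA
    have hmR : IsRMax gg (· ∈ A) m := by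
      refine ⟨hm, fun y hy hne => ?_⟩
      rcases htot y m hne with h | h
      · exact absurd (hmax y hy) (not_le.2 (hn _ _ h))
      · exact h
    have hsup : A.sup' hA v = v m :=
      le_antisymm (Finset.sup'_le _ _ fun y hy => Nat.cast_le.2 (hmax y hy)) (Finset.le_sup' v hm)
    obtain ⟨h1, h2⟩ := hc A hA m hmR
    refine ⟨h1, fun x hx hne => ?_⟩
    have h3 : T (x, m) + 1 ≤ T (c A, m) := by
      have := hrk m _ _ (h2 x hx hne)
      simp only [T]
      omega
    have h3' : (T (x, m) : ℝ) + 1 ≤ T (c A, m) := by exact_mod_cast h3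
    simp only [W, hsup, hGT]
    have h4 := Real.sigmoid_lt_one (u x + (v x - v m))
    have h5 := Real.sigmoid_pos (u (c A) + (v (c A) - v m))
    linarith

theorem exists_isRMax [Fintype X] (gg : X → X → Prop) (hgg : StrictLinear gg) (A : Finset X)
    (hA : A.Nonempty) : ∃ m, IsRMax gg (· ∈ A) m := by
  obtain ⟨⟨hasym, htrans⟩, htot⟩ := hgg
  induction hA using Finset.Nonempty.cons_induction with
  | singleton a => exact ⟨a, by simp [IsRMax]⟩
  | cons a s ha hs ih =>
    obtain ⟨m, hm, hmax⟩ := ih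
    have ham : a ≠ m := fun h => ha (h ▸ hm)
    rcases htot a m ham with h | h
    · refine ⟨a, by simp, fun y hy hne => ?_⟩
      have hy : y ∈ s := by simpa [hne] using hy
      by_cases hym : y = m
      · exact hym ▸ h
      · exact htrans _ _ _ h (hmax y hy hym)
    · refine ⟨m, by simp [hm], fun y hy hne => ?_⟩
      rcases Finset.mem_cons.1 hy with rfl | hy
      · exact h
      · exact hmax y hy hne

theorem csla_of_hasCER [Fintype X] (c : Finset X → X) (hch : ChoiceFun c) (h : HasCER c) :
    CSLA c := by
  classical
  obtain ⟨gg, U, hgg, hU, hc⟩ := h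
  obtain ⟨⟨hasym, htrans⟩, htot⟩ := id hgg
  let Γ : Finset X → Finset X := fun B => B.filter fun y => y = c B ∨ gg y (c B)
  have hmax : ∀ A : Finset X, A.Nonempty → IsRMax (fun x y => gg y x) (· ∈ Γ A) (c A) := by
    intro A hA
    refine ⟨by simp [Γ, hch A hA], fun y hy hne => ?_⟩
    exact (Finset.mem_filter.1 hy).2.resolve_left hne
  refine ⟨Γ, fun x y => gg y x, ⟨⟨fun x y h => hasym _ _ h, fun x y z h h' => htrans _ _ _ h' h⟩,
    fun x y hne => (htot x y hne).symm⟩, ⟨fun A hA => ⟨⟨_, (hmax A hA).1⟩, Finset.filter_subset _ _⟩,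
    ?_⟩, hmax⟩
  intro B hB x hx hmin hxmax
  have hxc : x ≠ c B := fun h => hxmax (h ▸ hmax B hB)
  obtain ⟨m, hm⟩ := exists_isRMax gg hgg B hB
  have hxm : x ≠ m := fun h => hmin (h ▸ hm)
  have hmB : IsRMax gg (· ∈ B.erase x) m :=
    ⟨Finset.mem_erase.2 ⟨hxm.symm, hm.1⟩, fun y hy => hm.2 y (Finset.mem_of_mem_erase hy)⟩
  obtain ⟨h1, h2⟩ := hc B hB m hm
  obtain ⟨h3, h4⟩ := hc _ ⟨m, hmB.1⟩ m hmB
  have hcB : c (B.erase x) = c B := by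
    by_contra hne
    exact lt_asymm (h2 _ (Finset.mem_of_mem_erase h3) hne)
      (h4 _ (Finset.mem_erase.2 ⟨hxc.symm, h1⟩) (Ne.symm hne))
  ext y
  simp only [Γ, hcB, mem_erase, mem_filter]
  tauto

/-- Independence of irrelevant alternatives for menus with a common `rhd`-minimum `m`. -/
theorem csla_contract {c : Finset X → X} {Γ : Finset X → Finset X} {rhd : X → X → Prop}
    (h : ExplBySLA Γ rhd c) {m : X} (B : Finset X) (hmB : m ∈ B) :
    ∀ A : Finset X, IsRMin rhd (· ∈ A) m → B ⊆ A → c A ∈ B → c B = c A := by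
  obtain ⟨⟨⟨hasym, -⟩, -⟩, ⟨-, hΓ⟩, hmax⟩ := h
  intro A
  induction A using Finset.strongInduction with
  | H A ih =>
    intro hm hBA hcB
    rcases hBA.eq_or_ssubset with rfl | hss
    · rfl
    obtain ⟨x, hxA, hxB⟩ := Finset.exists_of_ssubset hss
    have hxm : x ≠ m := fun h => hxB (h ▸ hmB)
    have hxc : x ≠ c A := fun h => hxB (h ▸ hcB)
    have hA : A.Nonempty := ⟨x, hxA⟩
    have hcA := hmax A hA
    have hE := hΓ A hA x hxA
      (fun h' => hasym _ _ (h'.2 m hm.1 hxm.symm) (hm.2 x hxA hxm))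
      (fun h' => hasym _ _ (h'.2 _ hcA.1 hxc.symm) (hcA.2 x h'.1 hxc))
    have hmE : m ∈ A.erase x := Finset.mem_erase.2 ⟨hxm.symm, hm.1⟩
    have hcE := hmax (A.erase x) ⟨m, hmE⟩
    rw [← hE] at hcE
    have hc : c (A.erase x) = c A := by
      by_contra hne
      exact hasym _ _ (hcE.2 _ (Finset.mem_erase.2 ⟨hxc.symm, hcA.1⟩) (Ne.symm hne))
        (hcA.2 _ (Finset.mem_of_mem_erase hcE.1) hne)
    rw [← hc]
    refine ih _ (Finset.erase_ssubset hxA)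
      ⟨hmE, fun y hy => hm.2 y (Finset.mem_of_mem_erase hy)⟩ (fun y hy => ?_) (hc ▸ hcB)
    exact Finset.mem_erase.2 ⟨fun h => hxB (h ▸ hy), hBA hy⟩

theorem hasCER_of_csla [Fintype X] (c : Finset X → X) (hch : ChoiceFun c) (h : CSLA c) :
    HasCER c := by
  classical
  obtain ⟨Γ, rhd, h⟩ := h
  obtain ⟨⟨hasym, htrans⟩, htot⟩ := h.1
  let S : X → X → Finset X := fun m x => {w | (w = m ∨ rhd w m) ∧ c {x, w, m} = x}
  choose U hU hUS using fun m : X => exists_injective_refinement fun x => (#(S m x) : ℝ)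
  refine ⟨fun x y => rhd y x, U, ⟨⟨fun x y h => hasym _ _ h, fun x y z h h' => htrans _ _ _ h' h⟩,
    fun x y hne => (htot x y hne).symm⟩, hU, ?_⟩
  intro A hA m hm
  refine ⟨hch A hA, fun y hy hyx => hUS m _ _ ?_⟩
  have hup : ∀ w ∈ A, w = m ∨ rhd w m := fun w hw => (eq_or_ne w m).imp_right (hm.2 w hw)
  have hxA := hch A hA
  generalize hx : c A = x at hyx hxA
  have hxym : c {x, y, m} = x := by
    rw [← hx]
    refine csla_contract h _ (by simp) A hm ?_ (by simp)
    rw [hx]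
    simp [Finset.insert_subset_iff, hxA, hy, hm.1]
  -- `S m y ⊂ S m x`, the element `x` itself witnessing strictness
  refine Nat.cast_lt.2 (Finset.card_lt_card ((Finset.ssubset_iff_of_subset ?_).2 ⟨x, ?_, ?_⟩))
  · intro w hw
    simp only [S, mem_filter, mem_univ, true_and] at hw ⊢
    obtain ⟨hwm, hcw⟩ := hw
    refine ⟨hwm, ?_⟩
    have hmin : IsRMin rhd (· ∈ ({x, y, w, m} : Finset X)) m := by
      refine ⟨by simp, fun z hz hne => ?_⟩
      simp only [mem_insert, mem_singleton] at hz
      rcases hz with rfl | rfl | rfl | rfl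
      · exact (hup _ hxA).resolve_left hne
      · exact (hup _ hy).resolve_left hne
      · exact hwm.resolve_left hne
      · exact absurd rfl hne
    have key : ∀ B : Finset X, m ∈ B → B ⊆ {x, y, w, m} → c {x, y, w, m} ∈ B →
        c B = c {x, y, w, m} := fun B hB => csla_contract h B hB _ hmin
    have k1 := key {x, y, m} (by simp) (by intro z; simp; tauto)
    have k2 := key {y, w, m} (by simp) (by intro z; simp; tauto)
    have k3 := key {x, w, m} (by simp) (by intro z; simp; tauto)
    have hmem := hch {x, y, w, m} ⟨m, by simp⟩
    have hc4 : c {x, y, w, m} = x := by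
      rw [hxym] at k1
      rw [hcw] at k2
      simp only [mem_insert, mem_singleton] at k1 k2 hmem
      grind
    rw [k3 (by simp [hc4]), hc4]
  · simp only [S, mem_filter, mem_univ, true_and]
    refine ⟨hup x hxA, ?_⟩
    rw [← hx]
    refine csla_contract h _ (by simp) A hm ?_ (by simp)
    rw [hx]
    simp [Finset.insert_subset_iff, hxA, hm.1]
  · simp only [S, mem_filter, mem_univ, true_and, not_and]
    intro _ h'
    rw [Finset.insert_comm, hxym] at h'
    exact hyx h'.symm

theorem stmt_6 [Fintype X] [Nonempty X] (c : Finset X → X) (hc : ChoiceFun c) :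
    (HasGTR c ↔ HasCER c) ∧ (HasCER c ↔ CSLA c) := by
  exact ⟨⟨hasCER_of_hasGTR c, hasGTR_of_hasCER c⟩, ⟨csla_of_hasCER c hc, hasCER_of_csla c hc⟩⟩
end

section
/- Let c be a choice with salient limited attention on a finite nonempty set X, and suppose there exist a menu A and x ∈ A such that x ≠ c(A) and c(A) ≠ c(A\{x}). Then for every general-temptation representation (u,v,W) of c: v(x) = max_{y∈A} v(y), and either u(c(A)) > u(c(A\{x})) and v(c(A)) < v(c(A\{x})), or u(c(A)) < u(c(A\{x})) and v(c(A)) > v(c(A\{x})). -/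
/-!
Write `a = c A`, `b = c (A.erase x)`; both lie in `A.erase x` and are distinct. In the menu `A`
the representation ranks `a` strictly above `b`, and in `A.erase x` it ranks `b` strictly above `a`.
The menu enters the ranking only through the maximal temptation, so removing `x` must lower that
maximum, which forces `x` to attain it on `A`. Since `W` is increasing in both coordinates, weak
dominance of one of `a`, `b` over the other in both `u` and `v` would fix their ranking for every
value of the maximum; hence `u` and `v` rank `a` and `b` strictly oppositely.
-/

open Finset

variable {X : Type*} [DecidableEq X]

theorem stmt_8 [Fintype X] [Nonempty X] (c : Finset X → X) (hc : ChoiceFun c)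
    (hCSLA : CSLA c) (A : Finset X) (hA : A.Nonempty) (x : X) (hx : x ∈ A)
    (h1 : x ≠ c A) (h2 : c A ≠ c (A.erase x)) :
    ∀ (u v : X → ℝ) (W : ℝ → ℝ → ℝ), GTRrep c u v W →
      v x = A.sup' hA v ∧
        ((u (c A) > u (c (A.erase x)) ∧ v (c A) < v (c (A.erase x))) ∨
         (u (c A) < u (c (A.erase x)) ∧ v (c A) > v (c (A.erase x)))) := by
  intro u v W ⟨_, hWu, hWv, hrep⟩
  have hW : ∀ r₁ r₂ s₁ s₂ : ℝ, r₁ ≤ r₂ → s₁ ≤ s₂ → W r₁ s₁ ≤ W r₂ s₂ := by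
    intro r₁ r₂ s₁ s₂ hr hs
    have hu : Monotone (fun r => W r s₁) := StrictMono.monotone fun p q h => hWu p q s₁ h
    have hv : Monotone (fun s => W r₂ s) := StrictMono.monotone fun p q h => hWv r₂ p q h
    exact (hu hr).trans (hv hs)
  have hB : (A.erase x).Nonempty := ⟨c A, mem_erase.2 ⟨h1.symm, hc A hA⟩⟩
  have haB : c A ∈ A.erase x := mem_erase.2 ⟨h1.symm, hc A hA⟩
  have hbA : c (A.erase x) ∈ A := mem_of_mem_erase (hc _ hB)
  have hab := (hrep A hA).2 _ hbA h2.symm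
  have hba := (hrep _ hB).2 _ haB h2
  refine ⟨?_, ?_⟩
  · by_contra hne
    -- The maximum is then attained in `A.erase x`, so both menus induce the same ranking.
    have hsup : (A.erase x).sup' hB v = A.sup' hA v := by
      refine le_antisymm (sup'_mono v (erase_subset x A) hB) ?_
      obtain ⟨m, hm, hmv⟩ := exists_mem_eq_sup' hA v
      have hmx : m ≠ x := by
        rintro rfl
        exact hne hmv.symm
      rw [hmv]
      exact le_sup' v (mem_erase.2 ⟨hmx, hm⟩)
    rw [hsup] at hba
    exact lt_asymm hab hba
  · -- Neither of `c A`, `c (A.erase x)` weakly dominates the other in both `u` and `v`.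
    have hnab : u (c (A.erase x)) ≤ u (c A) → v (c A) < v (c (A.erase x)) := by
      intro hu
      by_contra! hv
      exact (hW _ _ _ _ hu (sub_le_sub_right hv _)).not_gt hba
    have hnba : u (c A) ≤ u (c (A.erase x)) → v (c (A.erase x)) < v (c A) := by
      intro hu
      by_contra! hv
      exact (hW _ _ _ _ hu (sub_le_sub_right hv _)).not_gt hab
    rcases lt_trichotomy (u (c A)) (u (c (A.erase x))) with h | h | h
    · exact Or.inr ⟨h, hnba h.le⟩
    · exact absurd (hnab h.ge) (hnba h.le).not_gt
    · exact Or.inl ⟨h, hnab h.le⟩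
end

section
/- A choice function c on a finite nonempty set X is rationalizable (i.e., satisfies Axiom α) if and only if it is a choice with selective salient limited attention. -/
/-!
A rationalizing order together with the identity filter (full attention) is a selective salient
representation. Conversely, under a selective filter the removal of an unchosen item deletes at most
that item from the filtered menu, so the choice is unchanged; iterating gives Axiom α
(`CSSLA.choice_eq_of_subset`), and a choice function satisfying Axiom α is rationalized by its restriction
to pairs (`rationalizable_of_alpha`).
-/

open Finset

variable {X : Type*} [DecidableEq X]

/-- Axiom α: a selective filter makes the choice insensitive to removing an unchosen item (the
filter of the smaller menu still has `c B` as its maximum), hence to removing any set of them. -/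
lemma CSSLA.choice_eq_of_subset {X : Type*} [DecidableEq X] {c : Finset X → X} (hc : ChoiceFun c)
    (h : CSSLA c) (A B : Finset X) (hAB : A ⊆ B) (hcB : c B ∈ A) : c A = c B := by
  obtain ⟨Γ, r, ⟨⟨hasym, -⟩, -⟩, ⟨-, hΓ⟩, hmax⟩ := h
  have step : ∀ (B : Finset X) (x : X), x ∈ B → x ≠ c B → c (B.erase x) = c B := by
    intro B x hx hne
    have hB : B.Nonempty := ⟨x, hx⟩
    have hcB : c B ∈ B.erase x := Finset.mem_erase.2 ⟨hne.symm, hc B hB⟩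
    obtain ⟨h1, h2⟩ := hmax B hB
    obtain ⟨h3, h4⟩ := hmax (B.erase x) ⟨_, hcB⟩
    have hx' : ¬ IsRMax r (· ∈ Γ B) x := fun hm =>
      hasym _ _ (hm.2 _ h1 hne.symm) (h2 _ hm.1 hne)
    have heq := hΓ B hB x hx hx'
    rw [← heq] at h3 h4
    by_contra hcc
    exact hasym _ _ (h2 _ (Finset.mem_of_mem_erase h3) hcc)
      (h4 _ (Finset.mem_erase.2 ⟨hne.symm, h1⟩) (Ne.symm hcc))
  induction B using Finset.strongInduction with
  | H B ih =>
    rcases hAB.eq_or_ssubset with rfl | hss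
    · rfl
    · obtain ⟨x, hxB, hxA⟩ := Finset.exists_of_ssubset hss
      have hs := step B x hxB (fun h => hxA (h ▸ hcB))
      rw [← hs]
      exact ih _ (Finset.erase_ssubset hxB) (Finset.subset_erase.2 ⟨hAB, hxA⟩) (hs.symm ▸ hcB)

/-- Under Axiom α, the relation "`x` is chosen from `{x, y}`" rationalizes `c`. -/
lemma rationalizable_of_alpha {X : Type*} [DecidableEq X] {c : Finset X → X}
    (hc : ChoiceFun c)
    (hα : ∀ A B : Finset X, A ⊆ B → c B ∈ A → c A = c B) : Rationalizable c := by
  refine ⟨fun x y => x ≠ y ∧ c {x, y} = x, ⟨⟨?_, ?_⟩, ?_⟩, ?_⟩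
  · rintro x y ⟨hne, h1⟩ ⟨-, h2⟩
    rw [Finset.pair_comm, h1] at h2
    exact hne h2
  · rintro x y z ⟨hxy, h1⟩ ⟨hyz, h2⟩
    have hxz : x ≠ z := by
      rintro rfl
      rw [Finset.pair_comm, h1] at h2
      exact hxy h2
    refine ⟨hxz, ?_⟩
    -- The choice from `{x, y, z}` can be neither `y` nor `z`, so it is `x`.
    have hm : c {x, y, z} ∈ ({x, y, z} : Finset X) := hc _ (by simp)
    simp only [Finset.mem_insert, Finset.mem_singleton] at hm
    have a1 := hα {x, y} {x, y, z} (by grind)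
    have a2 := hα {y, z} {x, y, z} (by grind)
    have a3 := hα {x, z} {x, y, z} (by grind)
    grind
  · intro x y hne
    have hm : c {x, y} ∈ ({x, y} : Finset X) := hc _ (by simp)
    simp only [Finset.mem_insert, Finset.mem_singleton] at hm
    rcases hm with hm | hm
    · exact Or.inl ⟨hne, hm⟩
    · exact Or.inr ⟨hne.symm, by rwa [Finset.pair_comm]⟩
  · intro A hA
    refine ⟨hc A hA, fun y hy hne => ⟨hne.symm, hα _ A ?_ (by simp)⟩⟩
    have := hc A hA
    grind

theorem stmt_10 [Fintype X] [Nonempty X] (c : Finset X → X) (hc : ChoiceFun c) :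
    Rationalizable c ↔ CSSLA c := by
  constructor
  · rintro ⟨r, hr, h⟩
    -- Full attention: the identity filter.
    exact ⟨id, r, hr, ⟨fun A hA => ⟨hA, Finset.Subset.refl A⟩, fun _ _ _ _ _ => rfl⟩, h⟩
  · exact fun h => rationalizable_of_alpha hc (h.choice_eq_of_subset hc)
end

section
/- Let c be a choice function on a finite nonempty set X. For every switch (A,B) of c, there exist a menu C and an element x ∈ X such that A ⊆ C\{x} ⊆ C ⊆ B and (C\{x},C) is a minimal switch. -/
/-! Delete the elements of `B \ A` from `B` one at a time. Since `c B ∈ A`, no deleted element is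
`c B`; as the choice from `A` differs from `c B`, some deletion is the first to change the choice,
and that deletion is a minimal switch. Formally this is strong induction on `B`. -/

open Finset

variable {X : Type*} [DecidableEq X]

theorem stmt_18 [Fintype X] [Nonempty X] (c : Finset X → X) (hc : ChoiceFun c)
    (A B : Finset X) (hsw : Switch c A B) :
    ∃ (C : Finset X) (x : X), x ∈ C ∧ A ⊆ C.erase x ∧ C ⊆ B ∧
      x ≠ c C ∧ c (C.erase x) ≠ c C := by
  induction B using Finset.strongInduction with
  | H B ih =>
    obtain ⟨hA, hAB, hcB, hne⟩ := hsw
    have hss : A ⊂ B := hAB.ssubset_of_ne fun h => hne (congrArg c h)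
    obtain ⟨x, hxB, hxA⟩ := Finset.exists_of_ssubset hss
    have hAe : A ⊆ B.erase x := Finset.subset_erase.2 ⟨hAB, hxA⟩
    by_cases h : c (B.erase x) = c B
    · -- Removing `x` keeps the choice, so `(A, B \ {x})` is a smaller switch.
      obtain ⟨C, y, hy, hAC, hCB, hyC, hC⟩ :=
        ih (B.erase x) (Finset.erase_ssubset hxB) ⟨hA, hAe, h ▸ hcB, h ▸ hne⟩
      exact ⟨C, y, hy, hAC, hCB.trans (Finset.erase_subset x B), hyC, hC⟩
    · exact ⟨B, x, hxB, hAe, Finset.Subset.refl B, fun hx => hxA (hx ▸ hcB), h⟩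
end
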